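/- arXiv:1608.03861 — 6 statements merged into one kernel-verified Lean document; each statement's English description precedes it below -/
import Mathlib

section
/- For the FPGM-OPG parameters with any integer N ≥ 1, Σ_{k=0}^{N−1} (T_k − t_k²) + T_{N−1} ≥ (N − 2)N² / 24. -/
/-!
Put `m = ⌈N/2⌉`. For `k < m` the recursion gives `t_{k+1}² = t_{k+1} + t_k²`, so `T_k = t_k²` and
these terms of the sum vanish (`fpgm_opg_first_half`); it also gives `t_k ≥ (k + 2)/2`, hence
`T_{m-1} ≥ (m + 1)²/4`. For `k ≥ m` the `t_k` are explicit and linear in `k`, so with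
`A = T_{m-1}` and `M = N - m` both `T_{m-1+j}` and the partial sums are explicit polynomials in
`A`, `M`, `j`, increasing in `A`. Substituting `j = M` and `A ≥ (m + 1)²/4` leaves a polynomial
inequality in `m`, in the two cases `N = 2m` and `N = 2m - 1`.
-/

/-- The Nesterov half of the parameters: there `T_k = t_k²`, and `t_k` grows at least linearly. -/
lemma fpgm_opg_first_half (m : ℕ) (t T : ℕ → ℝ) (ht0 : t 0 = 1)
    (ht1 : ∀ i, i + 2 ≤ m → t (i + 1) = (1 + Real.sqrt (1 + 4 * t i ^ 2)) / 2)
    (hT0 : T 0 = t 0) (hT1 : ∀ i, T (i + 1) = T i + t (i + 1)) (k : ℕ) (hk : k + 1 ≤ m) :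
    T k = t k ^ 2 ∧ ((k : ℝ) + 2) / 2 ≤ t k := by
  induction k with
  | zero => rw [hT0, ht0]; norm_num
  | succ k ih =>
    obtain ⟨h1, h2⟩ := ih (by omega)
    have h := ht1 k (by omega)
    have hs := Real.sq_sqrt (show (0 : ℝ) ≤ 1 + 4 * t k ^ 2 by positivity)
    have hle : 2 * t k ≤ Real.sqrt (1 + 4 * t k ^ 2) :=
      Real.le_sqrt_of_sq_le (by nlinarith)
    constructor
    · rw [hT1, h1, h]
      nlinarith
    · push_cast
      linarith

/-- the FPGM-OPG parameters satisfy
Σ_{k=0}^{N−1}(T_k − t_k²) + T_{N−1} ≥ (N−2)N²/24. -/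
theorem fpgm_opg_parameter_sum_lower_bound
    (N : ℕ) (hN : 1 ≤ N)
    (t T : ℕ → ℝ) (ht0 : t 0 = 1)
    (ht1 : ∀ i, i + 2 ≤ (N + 1) / 2 → t (i + 1) = (1 + Real.sqrt (1 + 4 * t i ^ 2)) / 2)
    (ht2 : ∀ i, (N + 1) / 2 ≤ i + 1 → i + 2 ≤ N → t (i + 1) = ((N : ℝ) - i) / 2)
    (hT : ∀ i, T i = ∑ l ∈ Finset.range (i + 1), t l) :
    ((N : ℝ) - 2) * (N : ℝ) ^ 2 / 24
      ≤ ∑ k ∈ Finset.range N, (T k - t k ^ 2) + T (N - 1) := by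
  have hT0 : T 0 = t 0 := by simp [hT]
  have hT1 : ∀ i, T (i + 1) = T i + t (i + 1) := fun i => by
    rw [hT, hT, Finset.sum_range_succ]
  have hfirst := fpgm_opg_first_half ((N + 1) / 2) t T ht0 ht1 hT0 hT1
  -- `p = m - 1` is the last index of the first half, and `M = N - m` counts the remaining indices.
  obtain ⟨p, M, hp, hM, hpM⟩ : ∃ p M : ℕ, (N + 1) / 2 = p + 1 ∧ N = p + 1 + M ∧
      (M = p + 1 ∨ M = p) :=
    ⟨(N + 1) / 2 - 1, N - (N + 1) / 2, by omega, by omega, by omega⟩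
  rw [hp] at ht2 hfirst
  have hNr : (N : ℝ) = p + 1 + M := by rw [hM]; push_cast; ring
  have ht : ∀ j, j + 1 ≤ M → t (p + j + 1) = ((M : ℝ) + 1 - j) / 2 := fun j hj => by
    rw [ht2 (p + j) (by omega) (by omega), hNr]; push_cast; ring
  have hTj : ∀ j, j ≤ M →
      T (p + j) = T p + j * ((M : ℝ) + 2) / 2 - j * (j + 1) / 4 := by
    intro j
    induction j with
    | zero => intro _; simp
    | succ j ih =>
      intro hj
      rw [← add_assoc, hT1, ih (by omega), ht j hj]
      push_cast
      ring
  have hSj : ∀ j : ℕ, j ≤ M →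
      ∑ k ∈ Finset.range (p + 1 + j), (T k - t k ^ 2) =
        j * T p + ((M : ℝ) + 2) * (j * (j + 1)) / 4 - j * (j + 1) * (j + 2) / 12
          - (j * ((M : ℝ) + 2) ^ 2 - (M + 2) * (j * (j + 1)) + j * (j + 1) * (2 * j + 1) / 6) / 4 := by
    intro j
    induction j with
    | zero =>
      intro _
      rw [add_zero, Finset.sum_eq_zero]
      · simp
      · intro k hk
        rw [Finset.mem_range] at hk
        rw [(hfirst k (by omega)).1, sub_self]
    | succ j ih =>
      intro hj
      rw [← add_assoc, Finset.sum_range_succ, ih (by omega),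
        show p + 1 + j = p + j + 1 by omega, ht j hj,
        show p + j + 1 = p + (j + 1) by omega, hTj (j + 1) hj]
      push_cast
      ring
  have hA : ((p : ℝ) + 2) ^ 2 / 4 ≤ T p := by
    obtain ⟨h1, h2⟩ := hfirst p le_rfl
    have : (0 : ℝ) ≤ p := p.cast_nonneg
    rw [h1]
    nlinarith
  have hmono : ((M : ℝ) + 1) * (((p : ℝ) + 2) ^ 2 / 4) ≤ ((M : ℝ) + 1) * T p :=
    mul_le_mul_of_nonneg_left hA (by positivity)
  have hsum := hSj M le_rfl
  rw [← hM] at hsum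
  rw [hsum, show N - 1 = p + M by omega, hTj M le_rfl, hNr]
  have hp0 : (0 : ℝ) ≤ p := p.cast_nonneg
  have hp2 : (0 : ℝ) ≤ (p : ℝ) ^ 2 := by positivity
  have hp3 : (0 : ℝ) ≤ (p : ℝ) ^ 3 := by positivity
  rcases hpM with h | h
  · have hMr : (M : ℝ) = p + 1 := by rw [h]; push_cast; ring
    rw [hMr] at hmono ⊢
    nlinarith
  · rw [h] at hmono ⊢
    nlinarith
end

section
/- For the FPGM-OPG parameters with any integer N ≥ 1, T_{N−1} ≥ (2N² + 8N + 1)/16. -/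
/-!
Write `h = ⌈N/2⌉` and `m = N - h`. On the first half `√(1 + 4 t²) ≥ 2 t` gives
`t (i + 1) ≥ t i + 1/2`, hence `t i ≥ (i + 2)/2`, and these `h` terms contribute at least
`h (h + 3)/4`. The remaining terms are exactly `(m + 1)/2, …, 2/2` and contribute `m (m + 3)/4`.
Since `h² + m² ≥ N²/2`, the total is at least `(2 N² + 12 N)/16`, which is more than enough
because `4 N ≥ 1`.
-/

/-- the FPGM-OPG parameters satisfy T_{N−1} ≥ (2N² + 8N + 1)/16. -/
theorem fpgm_opg_parameter_T_lower_bound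
    (N : ℕ) (hN : 1 ≤ N)
    (t T : ℕ → ℝ) (ht0 : t 0 = 1)
    (ht1 : ∀ i, i + 2 ≤ (N + 1) / 2 → t (i + 1) = (1 + Real.sqrt (1 + 4 * t i ^ 2)) / 2)
    (ht2 : ∀ i, (N + 1) / 2 ≤ i + 1 → i + 2 ≤ N → t (i + 1) = ((N : ℝ) - i) / 2)
    (hT : ∀ i, T i = ∑ l ∈ Finset.range (i + 1), t l) :
    (2 * (N : ℝ) ^ 2 + 8 * (N : ℝ) + 1) / 16 ≤ T (N - 1) := by
  rw [hT, Nat.sub_add_cancel hN]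
  obtain ⟨h, hh⟩ : ∃ h, h = (N + 1) / 2 := ⟨_, rfl⟩
  rw [← hh] at ht1 ht2
  have hterm : ∀ i, i + 1 ≤ h → ((i : ℝ) + 2) / 2 ≤ t i := by
    intro i
    induction i with
    | zero => intro _; rw [ht0]; norm_num
    | succ i ih =>
      intro hi
      have hprev := ih (by omega)
      have hsqrt : 2 * t i ≤ Real.sqrt (1 + 4 * t i ^ 2) :=
        Real.le_sqrt_of_sq_le (by nlinarith)
      rw [ht1 i (by omega)]
      push_cast
      linarith
  have hfirst : ∀ k, k ≤ h → (k : ℝ) * (k + 3) / 4 ≤ ∑ l ∈ Finset.range k, t l := by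
    intro k
    induction k with
    | zero => intro _; simp
    | succ k ih =>
      intro hk
      have hprev := ih (by omega)
      have hk' := hterm k hk
      rw [Finset.sum_range_succ]
      push_cast
      linarith
  have hsecond : ∀ k, h + k ≤ N →
      (h : ℝ) * (h + 3) / 4 + k * (2 * ((N : ℝ) - h) + 3 - k) / 4
        ≤ ∑ l ∈ Finset.range (h + k), t l := by
    intro k
    induction k with
    | zero => intro _; simpa using hfirst h le_rfl
    | succ k ih =>
      intro hk
      have hprev := ih (by omega)
      -- `ht2` speaks of `t (i + 1)`; here `i = h + k - 1`, and `h ≥ 1` since `N ≥ 1`.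
      obtain ⟨i, hi⟩ : ∃ i, h + k = i + 1 := ⟨h + k - 1, by omega⟩
      have hval := ht2 i (by omega) (by omega)
      have hcast : (h : ℝ) + k = i + 1 := by exact_mod_cast hi
      rw [← hi] at hval
      rw [← Nat.add_assoc, Finset.sum_range_succ, hval]
      push_cast
      linarith
  have hle : h ≤ N := by omega
  have hfinal := hsecond (N - h) (by omega)
  rw [Nat.add_sub_cancel' hle, Nat.cast_sub hle] at hfinal
  have hN' : (1 : ℝ) ≤ N := by exact_mod_cast hN
  nlinarith [sq_nonneg ((N : ℝ) - 2 * h)]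
end

section
/- With h, λ, τ, γ, S as defined, the multipliers are dual-feasible: λ_i ≥ 0, τ_i ≥ 0, τ_0 = λ_1, λ_{N−1} + τ_{N−1} = 1, and λ_i − λ_{i+1} + τ_i = 0 for 1 ≤ i ≤ N−2; and the (N+1)×(N+1) symmetric block matrix [[S, τ/2], [τᵀ/2, γ/2]] equals (1/(2T_{N−1}))(diag(T̃ − t̃ ∘ t̃) + t̃ t̃ᵀ), where t̃ := (t_0, …, t_{N−1}, 1)ᵀ and T̃ := (T_0, …, T_{N−1}, 1)ᵀ, and in particular it is positive semidefinite. -/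
/-!
The multiplier relations are immediate from `T (i + 1) = T i + t (i + 1)`.  For the block matrix,
compare entries.  On the diagonal, `2 T_{N-1} S_{aa} = T_{a-1} + t_a = T_a` (only `t_0 = T_0` when
`a = 0`).  Below the diagonal, `b < a`, only `A_{a-1,a}` and `D_a` contribute, so
`2 T_{N-1} S_{ab} = T_{a-1} (h_{a,b} - [b = a - 1]) + t_a ∑_{j=b+1}^{a} h_{j,b}`,
and since `T_{a-1} + t_a = T_a` the recursion defining `h` says exactly that this is `t_a t_b`
(`step_identity`).  The matrix is symmetric, so this determines it.  Positive semidefiniteness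
follows because `T_i ≥ t_i²` makes the diagonal part nonnegative and the rest is a rank-one square.
-/

/-- The recursion for the step coefficients, in the form in which it enters the entry `(a, b)`,
`b < a`, of the dual matrix. -/
lemma step_identity (t T : ℕ → ℝ) (h : ℕ → ℕ → ℝ) (hTpos : ∀ i, 0 < T i)
    (hTs : ∀ i, T (i + 1) = T i + t (i + 1))
    (hdiag : ∀ i, h (i + 1) i = 1 + (t i - 1) * t (i + 1) / T (i + 1))
    (hoff : ∀ i, ∀ k < i, h (i + 1) k
        = t (i + 1) / T (i + 1) * (t k - ∑ j ∈ Finset.Icc (k + 1) i, h j k))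
    (a b : ℕ) (hab : b < a) :
    T (a - 1) * (h a b - if b = a - 1 then 1 else 0)
      + t a * ∑ j ∈ Finset.Icc (b + 1) a, h j b = t a * t b := by
  obtain ⟨i, rfl⟩ : ∃ i, a = i + 1 := ⟨a - 1, by omega⟩
  have hne := (hTpos (i + 1)).ne'
  have hTi : T i = T (i + 1) - t (i + 1) := by rw [hTs]; ring
  rw [Nat.add_sub_cancel, hTi]
  by_cases hbi : b = i
  · subst hbi
    rw [if_pos rfl, Finset.Icc_self, Finset.sum_singleton, hdiag]
    field_simp
    ring
  · rw [if_neg hbi, Finset.sum_Icc_succ_top (by omega), hoff i b (by omega)]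
    field_simp
    ring

/-- Summing a symmetrized family of unit matrices against coefficients `f` picks out at most one
coefficient from each of the two halves. -/
lemma sum_symm_unit (s : Finset ℕ) (f : ℕ → ℝ) (x y : ℝ) (a b : ℕ) :
    ∑ k ∈ s, (1 / 2 * f k) * (x * (if b = k then 1 else 0) + (if a = k then 1 else 0) * y)
      = x * (if b ∈ s then f b / 2 else 0) + y * (if a ∈ s then f a / 2 else 0) := by
  have hsplit : ∀ k, (1 / 2 * f k) * (x * (if b = k then 1 else 0) + (if a = k then 1 else 0) * y)
      = x * (if b = k then f k / 2 else 0) + y * (if a = k then f k / 2 else 0) := by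
    intro k
    split_ifs <;> ring
  simp only [hsplit, Finset.sum_add_distrib, ← Finset.mul_sum, Finset.sum_ite_eq]


/-- for the GFPGM step coefficients, the multipliers
λ_i = T_{i−1}/T_{N−1}, τ_i = t_i/T_{N−1}, γ = 1/T_{N−1} are dual-feasible, and the
(N+1)×(N+1) block matrix [[S, τ/2],[τᵀ/2, γ/2]] equals
(1/(2T_{N−1}))(diag(T̃ − t̃∘t̃) + t̃ t̃ᵀ), hence is positive semidefinite. -/
theorem gfpgm_dual_feasible_point
    (N : ℕ) (hN : 2 ≤ N)
    (t T : ℕ → ℝ) (ht0 : t 0 = 1) (htpos : ∀ i, 0 < t i)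
    (hT : ∀ i, T i = ∑ l ∈ Finset.range (i + 1), t l)
    (htT : ∀ i, t i ^ 2 ≤ T i)
    (h : ℕ → ℕ → ℝ)
    (hdiag : ∀ i, h (i + 1) i = 1 + (t i - 1) * t (i + 1) / T (i + 1))
    (hoff : ∀ i, ∀ k < i, h (i + 1) k
        = t (i + 1) / T (i + 1) * (t k - ∑ j ∈ Finset.Icc (k + 1) i, h j k))
    (u : ℕ → Fin N → ℝ) (hu : ∀ i (j : Fin N), u i j = if (j : ℕ) = i then 1 else 0)
    (A D : ℕ → Matrix (Fin N) (Fin N) ℝ)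
    (hA : ∀ i, A i = (1 / 2 : ℝ) • Matrix.vecMulVec (u i) (u i)
        - (1 / 2 : ℝ) • Matrix.vecMulVec (u (i - 1)) (u i)
        - (1 / 2 : ℝ) • Matrix.vecMulVec (u i) (u (i - 1))
        + ∑ k ∈ Finset.range i,
            ((1 / 2 : ℝ) * h i k) • (Matrix.vecMulVec (u i) (u k) + Matrix.vecMulVec (u k) (u i)))
    (hD : ∀ i, D i = (1 / 2 : ℝ) • Matrix.vecMulVec (u i) (u i)
        + ∑ j ∈ Finset.Icc 1 i, ∑ k ∈ Finset.range j,
            ((1 / 2 : ℝ) * h j k) • (Matrix.vecMulVec (u i) (u k) + Matrix.vecMulVec (u k) (u i)))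
    (lam tau : ℕ → ℝ) (gam : ℝ)
    (hlam : ∀ i, 1 ≤ i → i ≤ N - 1 → lam i = T (i - 1) / T (N - 1))
    (htau : ∀ i, i ≤ N - 1 → tau i = t i / T (N - 1))
    (hgam : gam = 1 / T (N - 1))
    (S : Matrix (Fin N) (Fin N) ℝ)
    (hS : S = ∑ i ∈ Finset.Icc 1 (N - 1), lam i • A i + ∑ i ∈ Finset.range N, tau i • D i)
    (M : Matrix (Fin N ⊕ Fin 1) (Fin N ⊕ Fin 1) ℝ)
    (hM : M = Matrix.fromBlocks S (Matrix.of fun i _ => tau (i : ℕ) / 2)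
        (Matrix.of fun _ j => tau (j : ℕ) / 2) (Matrix.of fun _ _ => gam / 2))
    (ttil Ttil : Fin N ⊕ Fin 1 → ℝ)
    (httil : ttil = Sum.elim (fun i : Fin N => t (i : ℕ)) fun _ => 1)
    (hTtil : Ttil = Sum.elim (fun i : Fin N => T (i : ℕ)) fun _ => 1) :
    ((∀ i, 1 ≤ i → i ≤ N - 1 → 0 ≤ lam i) ∧ (∀ i, i ≤ N - 1 → 0 ≤ tau i) ∧
      tau 0 = lam 1 ∧ lam (N - 1) + tau (N - 1) = 1 ∧
      ∀ i, 1 ≤ i → i ≤ N - 2 → lam i - lam (i + 1) + tau i = 0) ∧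
    M = (1 / (2 * T (N - 1))) •
        (Matrix.diagonal (fun j => Ttil j - ttil j ^ 2) + Matrix.vecMulVec ttil ttil) ∧
    M.PosSemidef := by
  have hTs : ∀ i, T (i + 1) = T i + t (i + 1) := fun i => by
    rw [hT (i + 1), hT i, Finset.sum_range_succ]
  have hT0 : T 0 = t 0 := by rw [hT]; simp
  have hTpos : ∀ i, 0 < T i := fun i => lt_of_lt_of_le (pow_pos (htpos i) 2) (htT i)
  have hP := hTpos (N - 1)
  have hPne := hP.ne'
  have hAe : ∀ i (a b : Fin N), A i a b =
      1 / 2 * ((if (a : ℕ) = i then 1 else 0) * (if (b : ℕ) = i then 1 else 0))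
      - 1 / 2 * ((if (a : ℕ) = i - 1 then 1 else 0) * (if (b : ℕ) = i then 1 else 0))
      - 1 / 2 * ((if (a : ℕ) = i then 1 else 0) * (if (b : ℕ) = i - 1 then 1 else 0))
      + ((if (a : ℕ) = i then 1 else 0) * (if (b : ℕ) < i then h i b / 2 else 0)
        + (if (b : ℕ) = i then 1 else 0) * (if (a : ℕ) < i then h i a / 2 else 0)) := by
    intro i a b
    have key := sum_symm_unit (Finset.range i) (h i) (if (a : ℕ) = i then 1 else 0)
      (if (b : ℕ) = i then 1 else 0) a b
    simp only [Finset.mem_range] at key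
    rw [← key, hA]
    simp only [Matrix.add_apply, Matrix.sub_apply, Matrix.smul_apply, Matrix.sum_apply,
      Matrix.vecMulVec_apply, hu, smul_eq_mul]
  have hDe : ∀ i (a b : Fin N), D i a b =
      1 / 2 * ((if (a : ℕ) = i then 1 else 0) * (if (b : ℕ) = i then 1 else 0))
      + ((if (a : ℕ) = i then 1 else 0)
          * (∑ j ∈ Finset.Icc 1 i, if (b : ℕ) < j then h j b / 2 else 0)
        + (if (b : ℕ) = i then 1 else 0)
          * (∑ j ∈ Finset.Icc 1 i, if (a : ℕ) < j then h j a / 2 else 0)) := by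
    intro i a b
    have key := fun j => sum_symm_unit (Finset.range j) (h j) (if (a : ℕ) = i then 1 else 0)
      (if (b : ℕ) = i then 1 else 0) a b
    simp only [Finset.mem_range] at key
    rw [Finset.mul_sum, Finset.mul_sum, ← Finset.sum_add_distrib,
      ← Finset.sum_congr rfl (fun j _ => key j), hD]
    simp only [Matrix.add_apply, Matrix.smul_apply, Matrix.sum_apply,
      Matrix.vecMulVec_apply, hu, smul_eq_mul]
  have hSe : ∀ a b : Fin N, S a b = ∑ i ∈ Finset.Icc 1 (N - 1), lam i * A i a b
      + ∑ i ∈ Finset.range N, tau i * D i a b := by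
    intro a b
    rw [hS]
    simp only [Matrix.add_apply, Matrix.smul_apply, Matrix.sum_apply, smul_eq_mul]
  have hSsymm : ∀ a b, S a b = S b a := by
    intro a b
    rw [hSe, hSe]
    congr 1 <;> refine Finset.sum_congr rfl fun i _ => ?_
    · rw [hAe, hAe]; ring
    · rw [hDe, hDe]; ring
  -- The sum of step coefficients attached to `u_j` in `D i` has no nonzero term when `i ≤ j`.
  have hzero : ∀ i j, i ≤ j →
      (∑ l ∈ Finset.Icc 1 i, if j < l then h l j / 2 else 0) = 0 := by
    intro i j hij
    refine Finset.sum_eq_zero fun l hl => if_neg ?_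
    have := (Finset.mem_Icc.mp hl).2
    omega
  have hSdiag : ∀ a : Fin N, S a a = T a / (2 * T (N - 1)) := by
    intro a
    have ha := a.isLt
    have hA' : ∀ i ∈ Finset.Icc 1 (N - 1), lam i * A i a a
        = if (a : ℕ) = i then lam i / 2 else 0 := by
      intro i hi
      have hi1 := (Finset.mem_Icc.mp hi).1
      rw [hAe]
      by_cases hai : (a : ℕ) = i
      · have h1 : ¬ (a : ℕ) = i - 1 := by omega
        have h2 : ¬ (a : ℕ) < i := by omega
        simp only [if_pos hai, if_neg h1, if_neg h2]
        ring
      · simp only [if_neg hai]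
        ring
    have hD' : ∀ i ∈ Finset.range N, tau i * D i a a
        = if (a : ℕ) = i then tau i / 2 else 0 := by
      intro i _
      rw [hDe]
      by_cases hai : (a : ℕ) = i
      · rw [hzero i a (by omega)]
        simp only [if_pos hai]
        ring
      · simp only [if_neg hai]
        ring
    rw [hSe, Finset.sum_congr rfl hA', Finset.sum_congr rfl hD', Finset.sum_ite_eq,
      Finset.sum_ite_eq, if_pos (Finset.mem_range.mpr ha), htau a (by omega)]
    -- Row `0` receives no `lam` term, as that sum starts at `1`; there `T 0 = t 0` closes the gap.
    by_cases ha0 : (a : ℕ) = 0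
    · rw [if_neg (by simp [ha0]), ha0, hT0]
      field_simp
      ring
    · rw [if_pos (Finset.mem_Icc.mpr ⟨by omega, by omega⟩), hlam a (by omega) (by omega)]
      have := hTs (a - 1)
      rw [Nat.sub_add_cancel (by omega)] at this
      rw [this]
      field_simp
  have hSoff : ∀ a b : Fin N, (b : ℕ) < a → S a b = t a * t b / (2 * T (N - 1)) := by
    intro a b hab
    have ha := a.isLt
    -- Below the diagonal, only the index `i = a` contributes to either sum.
    have hA' : ∀ i ∈ Finset.Icc 1 (N - 1), lam i * A i a b
        = if (a : ℕ) = i then lam i * ((h i b - if (b : ℕ) = i - 1 then 1 else 0) / 2) else 0 := by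
      intro i hi
      have hi1 := (Finset.mem_Icc.mp hi).1
      rw [hAe]
      by_cases hai : (a : ℕ) = i
      · have h1 : ¬ (b : ℕ) = i := by omega
        have h2 : (b : ℕ) < i := by omega
        simp only [if_pos hai, if_neg h1, if_pos h2]
        ring
      · simp only [if_neg hai]
        by_cases hbi : (b : ℕ) = i
        · have h1 : ¬ (a : ℕ) = i - 1 := by omega
          have h2 : ¬ (a : ℕ) < i := by omega
          simp only [if_neg h1, if_neg h2]
          ring
        · simp only [if_neg hbi]
          ring
    have hD' : ∀ i ∈ Finset.range N, tau i * D i a b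
        = if (a : ℕ) = i then tau i * ((∑ j ∈ Finset.Icc ((b : ℕ) + 1) i, h j b) / 2) else 0 := by
      intro i _
      rw [hDe]
      by_cases hai : (a : ℕ) = i
      · have h1 : ¬ (b : ℕ) = i := by omega
        have hfilter : (Finset.Icc 1 i).filter (fun j => (b : ℕ) < j)
            = Finset.Icc ((b : ℕ) + 1) i := by
          ext j
          simp only [Finset.mem_filter, Finset.mem_Icc]
          omega
        rw [← Finset.sum_filter, hfilter, Finset.sum_div]
        simp only [if_pos hai, if_neg h1]
        ring
      · simp only [if_neg hai]
        by_cases hbi : (b : ℕ) = i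
        · rw [hzero i a (by omega)]
          ring
        · simp only [if_neg hbi]
          ring
    rw [hSe, Finset.sum_congr rfl hA', Finset.sum_congr rfl hD', Finset.sum_ite_eq,
      Finset.sum_ite_eq, if_pos (Finset.mem_range.mpr ha),
      if_pos (Finset.mem_Icc.mpr ⟨by omega, by omega⟩), htau a (by omega),
      hlam a (by omega) (by omega), ← step_identity t T h hTpos hTs hdiag hoff a b hab]
    field_simp
  have hMeq : M = (1 / (2 * T (N - 1))) •
      (Matrix.diagonal (fun j => Ttil j - ttil j ^ 2) + Matrix.vecMulVec ttil ttil) := by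
    rw [hM, httil, hTtil]
    ext (a | a) (b | b)
    · simp only [Matrix.fromBlocks_apply₁₁, Matrix.smul_apply, Matrix.add_apply,
        Matrix.diagonal_apply, Matrix.vecMulVec_apply, Sum.elim_inl, smul_eq_mul, Sum.inl.injEq]
      rcases lt_trichotomy (a : ℕ) b with hlt | heq | hgt
      · have hne : a ≠ b := fun e => by simp [e] at hlt
        rw [hSsymm, hSoff b a hlt, if_neg hne]
        ring
      · obtain rfl := Fin.ext heq
        rw [hSdiag, if_pos rfl]
        ring
      · have hne : a ≠ b := fun e => by simp [e] at hgt
        rw [hSoff a b hgt, if_neg hne]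
        ring
    · have ha := a.isLt
      simp [Matrix.vecMulVec_apply, htau a (by omega)]
      ring
    · have hb := b.isLt
      simp [Matrix.vecMulVec_apply, htau b (by omega)]
      ring
    · obtain rfl := Subsingleton.elim a b
      simp [Matrix.vecMulVec_apply, hgam]
      ring
  refine ⟨⟨?_, ?_, ?_, ?_, ?_⟩, hMeq, ?_⟩
  · intro i h1 h2
    rw [hlam i h1 h2]
    exact div_nonneg (hTpos _).le hP.le
  · intro i hi
    rw [htau i hi]
    exact div_nonneg (htpos _).le hP.le
  · rw [htau 0 (by omega), hlam 1 le_rfl (by omega), Nat.sub_self, hT0]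
  · have := hTs (N - 1 - 1)
    rw [Nat.sub_add_cancel (by omega)] at this
    rw [htau _ le_rfl, hlam (N - 1) (by omega) le_rfl, ← add_div, ← this, div_self hPne]
  · intro i h1 h2
    have := hTs (i - 1)
    rw [Nat.sub_add_cancel h1] at this
    rw [hlam i h1 (by omega), hlam (i + 1) (by omega) (by omega), htau i (by omega),
      Nat.add_sub_cancel, this]
    ring
  · rw [hMeq]
    refine Matrix.PosSemidef.smul (Matrix.PosSemidef.add ?_ ?_) (by positivity)
    · refine Matrix.PosSemidef.diagonal fun j => ?_
      rw [hTtil, httil]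
      rcases j with j | j
      · simpa using htT j
      · simp
    · simpa using Matrix.posSemidef_vecMulVec_self_star ttil
end

section
/- With h, λ, τ, η, β, γ, S' as defined, the multipliers are dual-feasible: all of λ_i, τ_i, η, β_i are nonnegative, τ_0 = λ_1, λ_{N−1} + τ_{N−1} = η, Σ_{i=0}^{N} β_i = 1, and λ_i − λ_{i+1} + τ_i = 0 for 1 ≤ i ≤ N−2; and the (N+2)×(N+2) symmetric block matrix [[S', (τᵀ, 0)ᵀ/2], [(τᵀ, 0)/2, γ/2]] equals (τ_0/2)· t̃ t̃ᵀ, where t̃ := (t_0, …, t_{N−1}, 0, 1)ᵀ, and in particular it is positive semidefinite. -/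
/-!
The scalar conditions follow from `T (i + 1) = T i + t (i + 1)`, since `tau 0` is the inverse of a
positive number.

For the matrix identity, write `E i k` for `v i (v k)ᵀ`. The coefficient of the symmetric pair
`E i k + E k i` with `k < i` in `S'` is `tau 0 / 2` times
`T (i - 1) * (h i k - [k = i - 1]) + t i * ∑ j ∈ Icc (k + 1) i, h j k`, and the recursion defining
the step coefficients says exactly that this number is `t i * t k` (`step_coeff_identity`). On the
diagonal, `lam i / 2 + tau i / 2 - beta i` is `tau 0 / 2 * t i ^ 2`. Hence the `i`-th multiplier
terms add up to the increment of the rank-one form `w wᵀ`, `w = ∑ t l • v l`, when the term `l = i`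
is added to `w` (`bilin_increment`), and the sum telescopes (`bilin_total`). These two lemmas are
stated for a single matrix entry: `x i` and `y i` stand for `v i a` and `v i b`.
-/

/-- The recursion for the step coefficients, cleared of denominators; the diagonal case `k = m` and
the off-diagonal case `k < m` are combined. -/
lemma step_coeff_identity (t T : ℕ → ℝ) (hTpos : ∀ i, 0 < T i)
    (hTs : ∀ i, T (i + 1) = T i + t (i + 1)) (h : ℕ → ℕ → ℝ)
    (hdiag : ∀ i, h (i + 1) i = 1 + (t i - 1) * t (i + 1) / T (i + 1))
    (hoff : ∀ i, ∀ k < i, h (i + 1) k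
        = t (i + 1) / T (i + 1) * (t k - ∑ j ∈ Finset.Icc (k + 1) i, h j k))
    (m k : ℕ) (hk : k ≤ m) :
    T m * (h (m + 1) k - if k = m then 1 else 0)
      + t (m + 1) * ∑ j ∈ Finset.Icc (k + 1) (m + 1), h j k = t (m + 1) * t k := by
  have hne := (hTpos (m + 1)).ne'
  have hTm : T m = T (m + 1) - t (m + 1) := by rw [hTs]; ring
  rcases hk.lt_or_eq with hlt | rfl
  · rw [Finset.sum_Icc_succ_top (by omega), hoff m k hlt, if_neg hlt.ne, hTm]
    field_simp
    ring
  · simp only [Finset.Icc_self, Finset.sum_singleton, if_true]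
    rw [hdiag, hTm]
    field_simp
    ring

/-- The terms of index `m + 1` of one entry of `S'`, divided by `tau 0`, are the increment of
`1 / 2 * (∑ t l * x l) * (∑ t l * y l)`. -/
lemma bilin_increment (t T : ℕ → ℝ) (hTs : ∀ i, T (i + 1) = T i + t (i + 1)) (h : ℕ → ℕ → ℝ)
    (m : ℕ)
    (key : ∀ k ≤ m, T m * (h (m + 1) k - if k = m then 1 else 0)
      + t (m + 1) * ∑ j ∈ Finset.Icc (k + 1) (m + 1), h j k = t (m + 1) * t k)
    (x y : ℕ → ℝ) :
    T m * (1 / 2 * (x (m + 1) * y (m + 1)) - 1 / 2 * (x m * y (m + 1))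
        - 1 / 2 * (x (m + 1) * y m)
        + ∑ k ∈ Finset.range (m + 1), 1 / 2 * h (m + 1) k * (x (m + 1) * y k + x k * y (m + 1)))
      + t (m + 1) * (1 / 2 * (x (m + 1) * y (m + 1))
        + ∑ j ∈ Finset.Icc 1 (m + 1), ∑ k ∈ Finset.range j,
            1 / 2 * h j k * (x (m + 1) * y k + x k * y (m + 1)))
      - 1 / 2 * (T (m + 1) - t (m + 1) ^ 2) * (x (m + 1) * y (m + 1))
    = 1 / 2 * ((∑ l ∈ Finset.range (m + 2), t l * x l) * ∑ l ∈ Finset.range (m + 2), t l * y l)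
      - 1 / 2 * ((∑ l ∈ Finset.range (m + 1), t l * x l)
          * ∑ l ∈ Finset.range (m + 1), t l * y l) := by
  have hswap : ∑ j ∈ Finset.Icc 1 (m + 1), ∑ k ∈ Finset.range j,
        1 / 2 * h j k * (x (m + 1) * y k + x k * y (m + 1))
      = ∑ k ∈ Finset.range (m + 1), ∑ j ∈ Finset.Icc (k + 1) (m + 1),
        1 / 2 * h j k * (x (m + 1) * y k + x k * y (m + 1)) := by
    apply Finset.sum_comm'
    intro j k
    simp only [Finset.mem_Icc, Finset.mem_range]
    omega
  have hcross : x m * y (m + 1) + x (m + 1) * y m = ∑ k ∈ Finset.range (m + 1),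
      (if k = m then 1 else 0) * (x (m + 1) * y k + x k * y (m + 1)) := by
    simp [add_comm]
  have hsum : ∑ k ∈ Finset.range (m + 1), (T m * (h (m + 1) k - if k = m then 1 else 0)
        + t (m + 1) * ∑ j ∈ Finset.Icc (k + 1) (m + 1), h j k)
          * (x (m + 1) * y k + x k * y (m + 1))
      = ∑ k ∈ Finset.range (m + 1), t (m + 1) * t k * (x (m + 1) * y k + x k * y (m + 1)) :=
    Finset.sum_congr rfl fun k hk => by
      rw [key k (Nat.lt_succ_iff.mp (Finset.mem_range.mp hk))]
  have hL : ∑ k ∈ Finset.range (m + 1), (T m * (h (m + 1) k - if k = m then 1 else 0)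
        + t (m + 1) * ∑ j ∈ Finset.Icc (k + 1) (m + 1), h j k)
          * (x (m + 1) * y k + x k * y (m + 1))
      = 2 * T m * (∑ k ∈ Finset.range (m + 1),
          1 / 2 * h (m + 1) k * (x (m + 1) * y k + x k * y (m + 1)))
        - T m * (∑ k ∈ Finset.range (m + 1),
          (if k = m then 1 else 0) * (x (m + 1) * y k + x k * y (m + 1)))
        + 2 * t (m + 1) * ∑ k ∈ Finset.range (m + 1), ∑ j ∈ Finset.Icc (k + 1) (m + 1),
          1 / 2 * h j k * (x (m + 1) * y k + x k * y (m + 1)) := by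
    simp only [Finset.mul_sum, ← Finset.sum_sub_distrib, ← Finset.sum_add_distrib]
    refine Finset.sum_congr rfl fun k _ => ?_
    have : ∑ j ∈ Finset.Icc (k + 1) (m + 1),
          2 * t (m + 1) * (1 / 2 * h j k * (x (m + 1) * y k + x k * y (m + 1)))
        = (∑ j ∈ Finset.Icc (k + 1) (m + 1), t (m + 1) * h j k)
          * (x (m + 1) * y k + x k * y (m + 1)) := by
      rw [Finset.sum_mul]
      exact Finset.sum_congr rfl fun j _ => by ring
    rw [this]
    ring
  have hR : ∑ k ∈ Finset.range (m + 1), t (m + 1) * t k * (x (m + 1) * y k + x k * y (m + 1))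
      = t (m + 1) * x (m + 1) * (∑ l ∈ Finset.range (m + 1), t l * y l)
        + t (m + 1) * y (m + 1) * ∑ l ∈ Finset.range (m + 1), t l * x l := by
    simp only [Finset.mul_sum, ← Finset.sum_add_distrib]
    exact Finset.sum_congr rfl fun k _ => by ring
  rw [hL, hR, ← hcross] at hsum
  rw [hswap, Finset.sum_range_succ _ (m + 1), Finset.sum_range_succ (fun l => t l * y l) (m + 1),
    hTs m]
  linear_combination (1 / 2) * hsum

/-- The telescoped sum of the increments: one entry of `S'` without its last row and column. -/
lemma bilin_total (t T : ℕ → ℝ) (ht0 : t 0 = 1) (hT0 : T 0 = 1)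
    (hTs : ∀ i, T (i + 1) = T i + t (i + 1)) (h : ℕ → ℕ → ℝ)
    (key : ∀ m, ∀ k ≤ m, T m * (h (m + 1) k - if k = m then 1 else 0)
      + t (m + 1) * ∑ j ∈ Finset.Icc (k + 1) (m + 1), h j k = t (m + 1) * t k)
    (x y : ℕ → ℝ) (n : ℕ) :
    ∑ i ∈ Finset.Icc 1 n, T (i - 1) * (1 / 2 * (x i * y i) - 1 / 2 * (x (i - 1) * y i)
        - 1 / 2 * (x i * y (i - 1))
        + ∑ k ∈ Finset.range i, 1 / 2 * h i k * (x i * y k + x k * y i))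
      + ∑ i ∈ Finset.range (n + 1), t i * (1 / 2 * (x i * y i)
        + ∑ j ∈ Finset.Icc 1 i, ∑ k ∈ Finset.range j, 1 / 2 * h j k * (x i * y k + x k * y i))
      - ∑ i ∈ Finset.range (n + 1), 1 / 2 * (T i - t i ^ 2) * (x i * y i)
    = 1 / 2 * ((∑ l ∈ Finset.range (n + 1), t l * x l)
        * ∑ l ∈ Finset.range (n + 1), t l * y l) := by
  induction n with
  | zero => simp [ht0, hT0]
  | succ m ih =>
    have hinc := bilin_increment t T hTs h m (key m) x y
    rw [Finset.sum_Icc_succ_top (by omega), Finset.sum_range_succ _ (m + 1),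
      Finset.sum_range_succ (fun i => 1 / 2 * (T i - t i ^ 2) * (x i * y i)) (m + 1)]
    simp only [Nat.add_sub_cancel]
    linear_combination ih + hinc

/-- for the GFPGM step coefficients, the multipliers
τ_0 = ((1/2)(Σ_{k=0}^{N−1}(T_k − t_k²) + T_{N−1}))⁻¹, λ_i = T_{i−1}τ_0, τ_i = t_iτ_0,
η = T_{N−1}τ_0, β_i = (1/2)(T_i − t_i²)τ_0, β_N = (1/2)T_{N−1}τ_0, γ = τ_0 are
dual-feasible for the composite-gradient-mapping PEP, and the (N+2)×(N+2) block
matrix [[S', (τᵀ,0)ᵀ/2],[(τᵀ,0)/2, γ/2]] equals (τ_0/2)·t̃ t̃ᵀ with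
t̃ = (t_0,…,t_{N−1},0,1)ᵀ, hence is positive semidefinite. -/
theorem gfpgm_cgm_dual_feasible_point
    (N : ℕ) (hN : 2 ≤ N)
    (t T : ℕ → ℝ) (ht0 : t 0 = 1) (htpos : ∀ i, 0 < t i)
    (hT : ∀ i, T i = ∑ l ∈ Finset.range (i + 1), t l)
    (htT : ∀ i, t i ^ 2 ≤ T i)
    (h : ℕ → ℕ → ℝ)
    (hdiag : ∀ i, h (i + 1) i = 1 + (t i - 1) * t (i + 1) / T (i + 1))
    (hoff : ∀ i, ∀ k < i, h (i + 1) k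
        = t (i + 1) / T (i + 1) * (t k - ∑ j ∈ Finset.Icc (k + 1) i, h j k))
    (v : ℕ → Fin (N + 1) → ℝ) (hv : ∀ i (j : Fin (N + 1)), v i j = if (j : ℕ) = i then 1 else 0)
    (Abar Dbar : ℕ → Matrix (Fin (N + 1)) (Fin (N + 1)) ℝ)
    (hAbar : ∀ i, Abar i = (1 / 2 : ℝ) • Matrix.vecMulVec (v i) (v i)
        - (1 / 2 : ℝ) • Matrix.vecMulVec (v (i - 1)) (v i)
        - (1 / 2 : ℝ) • Matrix.vecMulVec (v i) (v (i - 1))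
        + ∑ k ∈ Finset.range i,
            ((1 / 2 : ℝ) * h i k) • (Matrix.vecMulVec (v i) (v k) + Matrix.vecMulVec (v k) (v i)))
    (hDbar : ∀ i, Dbar i = (1 / 2 : ℝ) • Matrix.vecMulVec (v i) (v i)
        + ∑ j ∈ Finset.Icc 1 i, ∑ k ∈ Finset.range j,
            ((1 / 2 : ℝ) * h j k) • (Matrix.vecMulVec (v i) (v k) + Matrix.vecMulVec (v k) (v i)))
    (lam tau beta : ℕ → ℝ) (eta gam : ℝ)
    (htau0 : tau 0 = (1 / 2 * (∑ k ∈ Finset.range N, (T k - t k ^ 2) + T (N - 1)))⁻¹)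
    (htau : ∀ i, 1 ≤ i → i ≤ N - 1 → tau i = t i * tau 0)
    (hlam : ∀ i, 1 ≤ i → i ≤ N - 1 → lam i = T (i - 1) * tau 0)
    (heta : eta = T (N - 1) * tau 0)
    (hbeta : ∀ i, i ≤ N - 1 → beta i = 1 / 2 * (T i - t i ^ 2) * tau 0)
    (hbetaN : beta N = 1 / 2 * T (N - 1) * tau 0)
    (hgam : gam = tau 0)
    (S' : Matrix (Fin (N + 1)) (Fin (N + 1)) ℝ)
    (hS' : S' = ∑ i ∈ Finset.Icc 1 (N - 1), lam i • Abar i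
        + ∑ i ∈ Finset.range N, tau i • Dbar i
        + (eta / 2) • Matrix.vecMulVec (v N) (v N)
        - ∑ i ∈ Finset.range (N + 1), beta i • Matrix.vecMulVec (v i) (v i))
    (M : Matrix (Fin (N + 1) ⊕ Fin 1) (Fin (N + 1) ⊕ Fin 1) ℝ)
    (hM : M = Matrix.fromBlocks S'
        (Matrix.of fun i _ => (if (i : ℕ) < N then tau (i : ℕ) else 0) / 2)
        (Matrix.of fun _ j => (if (j : ℕ) < N then tau (j : ℕ) else 0) / 2)
        (Matrix.of fun _ _ => gam / 2))
    (ttil : Fin (N + 1) ⊕ Fin 1 → ℝ)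
    (httil : ttil = Sum.elim (fun i : Fin (N + 1) => if (i : ℕ) < N then t (i : ℕ) else 0)
        fun _ => 1) :
    ((∀ i, 1 ≤ i → i ≤ N - 1 → 0 ≤ lam i) ∧ (∀ i, i ≤ N - 1 → 0 ≤ tau i) ∧
      0 ≤ eta ∧ (∀ i, i ≤ N → 0 ≤ beta i) ∧
      tau 0 = lam 1 ∧ lam (N - 1) + tau (N - 1) = eta ∧
      (∑ i ∈ Finset.range (N + 1), beta i) = 1 ∧
      ∀ i, 1 ≤ i → i ≤ N - 2 → lam i - lam (i + 1) + tau i = 0) ∧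
    M = (tau 0 / 2) • Matrix.vecMulVec ttil ttil ∧
    M.PosSemidef := by
  have hTs : ∀ i, T (i + 1) = T i + t (i + 1) := fun i => by
    rw [hT, hT, Finset.sum_range_succ _ (i + 1)]
  have hTpos : ∀ i, 0 < T i := fun i => by
    rw [hT]
    exact Finset.sum_pos (fun l _ => htpos l) ⟨0, by simp⟩
  have hT0 : T 0 = 1 := by simp [hT, ht0]
  obtain ⟨n, rfl⟩ : ∃ n, N = n + 2 := ⟨N - 2, by omega⟩
  simp only [show n + 2 - 1 = n + 1 by omega, show n + 2 - 2 = n by omega] at *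
  have hden : 0 < 1 / 2 * (∑ k ∈ Finset.range (n + 2), (T k - t k ^ 2) + T (n + 1)) := by
    have := Finset.sum_nonneg fun k (_ : k ∈ Finset.range (n + 2)) => sub_nonneg.mpr (htT k)
    have := hTpos (n + 1)
    positivity
  have htau0pos : 0 < tau 0 := by
    rw [htau0]
    exact inv_pos.mpr hden
  have htau' : ∀ i, i ≤ n + 1 → tau i = t i * tau 0 := by
    intro i hi
    rcases Nat.eq_zero_or_pos i with rfl | hpos
    · rw [ht0, one_mul]
    · exact htau i hpos hi
  have hMeq : M = (tau 0 / 2) • Matrix.vecMulVec ttil ttil := by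
    have key := step_coeff_identity t T hTpos hTs h hdiag hoff
    have hw : ∀ a : Fin (n + 2 + 1), ∑ l ∈ Finset.range (n + 1 + 1), t l * v l a
        = if (a : ℕ) < n + 2 then t a else 0 := by
      intro a
      simp only [hv, mul_ite, mul_one, mul_zero, Finset.sum_ite_eq, Finset.mem_range]
    have hS : ∀ a b, S' a b = tau 0 / 2 * ((if (a : ℕ) < n + 2 then t a else 0)
        * if (b : ℕ) < n + 2 then t b else 0) := by
      intro a b
      have htot := bilin_total t T ht0 hT0 hTs h key (fun i => v i a) (fun i => v i b) (n + 1)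
      rw [hw, hw] at htot
      have h1 : ∀ i ∈ Finset.Icc 1 (n + 1), lam i * Abar i a b
          = tau 0 * (T (i - 1) * (1 / 2 * (v i a * v i b) - 1 / 2 * (v (i - 1) a * v i b)
            - 1 / 2 * (v i a * v (i - 1) b)
            + ∑ k ∈ Finset.range i, 1 / 2 * h i k * (v i a * v k b + v k a * v i b))) := by
        intro i hi
        obtain ⟨hi1, hi2⟩ := Finset.mem_Icc.mp hi
        rw [hlam i hi1 hi2, hAbar]
        simp only [Matrix.add_apply, Matrix.sub_apply, Matrix.smul_apply, Matrix.sum_apply,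
          Matrix.vecMulVec_apply, smul_eq_mul]
        ring
      have h2 : ∀ i ∈ Finset.range (n + 2), tau i * Dbar i a b
          = tau 0 * (t i * (1 / 2 * (v i a * v i b)
            + ∑ j ∈ Finset.Icc 1 i, ∑ k ∈ Finset.range j,
              1 / 2 * h j k * (v i a * v k b + v k a * v i b))) := by
        intro i hi
        rw [htau' i (by have := Finset.mem_range.mp hi; omega), hDbar]
        simp only [Matrix.add_apply, Matrix.smul_apply, Matrix.sum_apply,
          Matrix.vecMulVec_apply, smul_eq_mul]
        ring
      have h3 : ∀ i ∈ Finset.range (n + 2), beta i * (v i a * v i b)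
          = tau 0 * (1 / 2 * (T i - t i ^ 2) * (v i a * v i b)) := by
        intro i hi
        rw [hbeta i (by have := Finset.mem_range.mp hi; omega)]
        ring
      rw [hS']
      simp only [Matrix.add_apply, Matrix.sub_apply, Matrix.smul_apply, Matrix.sum_apply,
        Matrix.vecMulVec_apply, smul_eq_mul]
      rw [Finset.sum_range_succ (fun i => beta i * (v i a * v i b)), Finset.sum_congr rfl h1,
        Finset.sum_congr rfl h2, Finset.sum_congr rfl h3, hbetaN, heta, ← Finset.mul_sum,
        ← Finset.mul_sum, ← Finset.mul_sum]
      linear_combination tau 0 * htot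
    have hcol : ∀ a : ℕ, (if a < n + 2 then tau a else 0)
        = tau 0 * if a < n + 2 then t a else 0 := by
      intro a
      split_ifs with ha
      · rw [htau' a (by omega), mul_comm]
      · simp
    subst hM httil
    ext (a | a) (b | b)
    · simp [hS, Matrix.vecMulVec_apply]
    · simp only [Matrix.fromBlocks_apply₁₂, Matrix.of_apply, Matrix.smul_apply,
        Matrix.vecMulVec_apply, Sum.elim_inl, Sum.elim_inr, smul_eq_mul, hcol]
      ring
    · simp only [Matrix.fromBlocks_apply₂₁, Matrix.of_apply, Matrix.smul_apply,
        Matrix.vecMulVec_apply, Sum.elim_inl, Sum.elim_inr, smul_eq_mul, hcol]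
      ring
    · simp [hgam, Matrix.vecMulVec_apply]
  refine ⟨⟨?_, ?_, ?_, ?_, ?_, ?_, ?_, ?_⟩, hMeq, ?_⟩
  · intro i h1 h2
    rw [hlam i h1 h2]
    exact mul_nonneg (hTpos _).le htau0pos.le
  · intro i hi
    rw [htau' i hi]
    exact mul_nonneg (htpos i).le htau0pos.le
  · rw [heta]
    exact mul_nonneg (hTpos _).le htau0pos.le
  · intro i hi
    rcases hi.lt_or_eq with hlt | rfl
    · rw [hbeta i (by omega)]
      exact mul_nonneg (mul_nonneg (by norm_num) (sub_nonneg.mpr (htT i))) htau0pos.le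
    · rw [hbetaN]
      exact mul_nonneg (mul_nonneg (by norm_num) (hTpos _).le) htau0pos.le
  · rw [hlam 1 le_rfl (by omega), Nat.sub_self, hT0, one_mul]
  · rw [hlam (n + 1) (by omega) le_rfl, htau' (n + 1) le_rfl, heta, Nat.add_sub_cancel, hTs n]
    ring
  · have hb : ∀ i ∈ Finset.range (n + 2), beta i = tau 0 / 2 * (T i - t i ^ 2) := by
      intro i hi
      rw [hbeta i (by have := Finset.mem_range.mp hi; omega)]
      ring
    rw [Finset.sum_range_succ, Finset.sum_congr rfl hb, ← Finset.mul_sum, hbetaN]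
    have hinv := inv_mul_cancel₀ hden.ne'
    rw [← htau0] at hinv
    linear_combination hinv
  · intro i h1 h2
    obtain ⟨m, rfl⟩ : ∃ m, i = m + 1 := ⟨i - 1, by omega⟩
    rw [hlam (m + 1) h1 (by omega), hlam (m + 1 + 1) (by omega) (by omega),
      htau' (m + 1) (by omega)]
    simp only [Nat.add_sub_cancel]
    rw [hTs m]
    ring
  · rw [hMeq]
    have := Matrix.posSemidef_vecMulVec_self_star ttil
    rw [star_trivial] at this
    exact this.smul (by positivity)
end

section
/- The step coefficients h defined by the GFPGM formula satisfy the equivalent recursion: for every i ≥ 1, h_{i+1,k} = ((T_i − t_i)t_{i+1}/(t_i T_{i+1})) · h_{i,k} for 0 ≤ k ≤ i−2, and h_{i+1,i−1} = ((T_i − t_i)t_{i+1}/(t_i T_{i+1})) · (h_{i,i−1} − 1). -/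
/-!
Write `S = t k - ∑ j ∈ Icc (k + 1) (i - 1), h j k`. For `k + 2 ≤ i` the defining formula gives
`h i k = (t i / T i) * S` and `h (i + 1) k = (t (i + 1) / T (i + 1)) * (S - h i k)`; eliminating
`S` through `S = (T i / t i) * h i k` gives the first identity. For `k = i - 1` one has
`S = t k` and `h i k - 1 = (t k - 1) * t i / T i`, so that
`t k - h i k = (t k - 1) * (T i - t i) / T i`, which gives the second.
-/

/-- the GFPGM step coefficients satisfy the equivalent recursion
h_{i+1,k} = ((T_i − t_i)t_{i+1}/(t_i T_{i+1}))·h_{i,k} for 0 ≤ k ≤ i−2 and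
h_{i+1,i−1} = ((T_i − t_i)t_{i+1}/(t_i T_{i+1}))·(h_{i,i−1} − 1), for every i ≥ 1. -/
theorem gfpgm_step_coefficients_recursion
    (t T : ℕ → ℝ) (ht0 : t 0 = 1) (htpos : ∀ i, 0 < t i)
    (hT : ∀ i, T i = ∑ l ∈ Finset.range (i + 1), t l)
    (h : ℕ → ℕ → ℝ)
    (hdiag : ∀ i, h (i + 1) i = 1 + (t i - 1) * t (i + 1) / T (i + 1))
    (hoff : ∀ i, ∀ k < i, h (i + 1) k
        = t (i + 1) / T (i + 1) * (t k - ∑ j ∈ Finset.Icc (k + 1) i, h j k)) :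
    ∀ i, 1 ≤ i →
      (∀ k, k + 2 ≤ i →
        h (i + 1) k = (T i - t i) * t (i + 1) / (t i * T (i + 1)) * h i k) ∧
      h (i + 1) (i - 1) = (T i - t i) * t (i + 1) / (t i * T (i + 1)) * (h i (i - 1) - 1) := by
  have hTpos : ∀ i, 0 < T i := fun i => by
    rw [hT]
    exact Finset.sum_pos (fun l _ => htpos l) ⟨0, by simp⟩
  intro i hi
  obtain ⟨n, rfl⟩ : ∃ n, i = n + 1 := ⟨i - 1, by omega⟩
  have a := (htpos (n + 1)).ne'
  have b := (hTpos (n + 1)).ne'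
  have c := (hTpos (n + 1 + 1)).ne'
  refine ⟨fun k hk => ?_, ?_⟩
  · -- Both coefficients involve the same partial sum; the later one has the extra
    -- summand `h (n + 1) k`.
    rw [hoff (n + 1) k (by omega), Finset.sum_Icc_succ_top (by omega), hoff n k (by omega)]
    field_simp
    ring
  · -- Here the sum in `hoff` has the single term `h (n + 1) n`.
    rw [Nat.add_sub_cancel, hoff (n + 1) n (by omega), Finset.Icc_self, Finset.sum_singleton,
      hdiag n]
    field_simp
    ring
end

section
/- Let t be the FISTA parameter sequence, t_0 = 1 and t_{i+1} = (1 + √(1 + 4t_i²))/2, and let the FPGM (FISTA) iterates be y_0 = x_0 and, for i ≥ 0, x_{i+1} = p(y_i) and y_{i+1} = x_{i+1} + ((t_i − 1)/t_{i+1})(x_{i+1} − x_i). Then for every N ≥ 1, F(x_N) − F(x_*) ≤ L R² / (2 t_{N−1}²) ≤ 2 L R² / (N + 1)². -/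
/-!
The argument is the Beck–Teboulle Lyapunov analysis. Strong convexity of the proximal model
together with the descent lemma for `f` gives the basic inequality
`F (p y) + L/2 ‖z - p y‖² ≤ F z + L/2 ‖z - y‖²` for all `y`, `z` (`prox_grad_ineq`).
Applied at `y = y_{i+1}` and `z = (1 - 1/t) x_{i+1} + (1/t) x_*` with `t = t_{i+1}`, and multiplied
by `t²`, it shows, thanks to `t_{i+1}² - t_{i+1} = t_i²` and to the choice of the momentum
coefficient, that the energy
`t_i² (F x_{i+1} - F x_*) + L/2 ‖t_i x_{i+1} - (t_i - 1) x_i - x_*‖²`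
is nonincreasing; initially it is at most `L/2 ‖x_0 - x_*‖²`.
The second bound is the growth estimate `t_i ≥ (i + 2)/2`.
-/

open scoped RealInnerProductSpace

section Aux

variable {E : Type*} [NormedAddCommGroup E] [InnerProductSpace ℝ E]

lemma hasDerivAt_along_line {f : E → ℝ} {f' : E → E}
    (hgrad : ∀ z : E, HasFDerivAt f (innerSL ℝ (f' z)) z) (y d : E) (s : ℝ) :
    HasDerivAt (fun s : ℝ => f (y + s • d)) ⟪f' (y + s • d), d⟫ s := by
  have h1 : HasDerivAt (fun s : ℝ => y + s • d) d s := by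
    simpa using ((hasDerivAt_id s).smul_const d).const_add y
  exact (hgrad (y + s • d)).comp_hasDerivAt s h1

/-- The descent lemma: a function with `L`-Lipschitz gradient lies below its quadratic model. -/
lemma descent_lemma {L : ℝ} {f : E → ℝ} {f' : E → E}
    (hgrad : ∀ z : E, HasFDerivAt f (innerSL ℝ (f' z)) z)
    (hLip : ∀ u v : E, ‖f' u - f' v‖ ≤ L * ‖u - v‖) (y z : E) :
    f z ≤ f y + ⟪f' y, z - y⟫ + L / 2 * ‖z - y‖ ^ 2 := by
  set d := z - y with hd
  -- The gap between `f` and its model along the segment is nonincreasing.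
  have hder : ∀ s : ℝ, HasDerivAt
      (fun s : ℝ => f (y + s • d) - (s * ⟪f' y, d⟫ + s ^ 2 * (L / 2 * ‖d‖ ^ 2)))
      (⟪f' (y + s • d), d⟫ - (⟪f' y, d⟫ + s * (L * ‖d‖ ^ 2))) s := by
    intro s
    have h2 := ((hasDerivAt_id s).mul_const ⟪f' y, d⟫).add
      (((hasDerivAt_id s).pow 2).mul_const (L / 2 * ‖d‖ ^ 2))
    refine ((hasDerivAt_along_line hgrad y d s).sub h2).congr_deriv ?_
    simp
    ring
  have hanti := antitoneOn_of_deriv_nonpos (convex_Icc (0 : ℝ) 1)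
    (fun s _ => (hder s).continuousAt.continuousWithinAt)
    (fun s _ => (hder s).differentiableAt.differentiableWithinAt)
    (fun s hs => by
      rw [interior_Icc] at hs
      rw [(hder s).deriv]
      have h1 : ⟪f' (y + s • d) - f' y, d⟫ ≤ ‖f' (y + s • d) - f' y‖ * ‖d‖ :=
        real_inner_le_norm _ _
      have h2 := hLip (y + s • d) y
      rw [add_sub_cancel_left, norm_smul, Real.norm_of_nonneg hs.1.le] at h2
      have h3 := mul_le_mul_of_nonneg_right h2 (norm_nonneg d)
      rw [inner_sub_left] at h1
      nlinarith)
  have h := hanti (Set.left_mem_Icc.2 zero_le_one) (Set.right_mem_Icc.2 zero_le_one) zero_le_one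
  have hz : y + d = z := by rw [hd]; abel
  simp [hz] at h
  linarith

lemma convex_gradient_ineq {f : E → ℝ} {f' : E → E} (hf : ConvexOn ℝ Set.univ f)
    (hgrad : ∀ z : E, HasFDerivAt f (innerSL ℝ (f' z)) z) (y z : E) :
    f y + ⟪f' y, z - y⟫ ≤ f z := by
  have hc : ConvexOn ℝ Set.univ (fun s : ℝ => f (y + s • (z - y))) := by
    refine ⟨convex_univ, fun a _ b _ u v hu hv huv => ?_⟩
    have h := hf.2 (Set.mem_univ (y + a • (z - y))) (Set.mem_univ (y + b • (z - y))) hu hv huv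
    convert h using 2
    obtain rfl : v = 1 - u := by linarith
    simp only [smul_eq_mul]
    module
  have h := hc.le_slope_of_hasDerivAt (Set.mem_univ 0) (Set.mem_univ 1) zero_lt_one
    (hasDerivAt_along_line hgrad y (z - y) 0)
  simp [slope_def_field] at h
  simp only [inner_sub_right] at h ⊢
  linarith

/-- The proximal model is `L`-strongly convex, so it grows quadratically around its minimizer `q`. -/
lemma prox_three_point {L : ℝ} {φ : E → ℝ} (hφ : ConvexOn ℝ Set.univ φ) (c : ℝ) (g y q : E)
    (hq : IsMinOn (fun z => c + ⟪g, z - y⟫ + L / 2 * ‖z - y‖ ^ 2 + φ z) Set.univ q) (z : E) :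
    ⟪g, q - y⟫ + L / 2 * ‖q - y‖ ^ 2 + φ q + L / 2 * ‖z - q‖ ^ 2
      ≤ ⟪g, z - y⟫ + L / 2 * ‖z - y‖ ^ 2 + φ z := by
  set Δ := ⟪g, z - y⟫ + L / 2 * ‖z - y‖ ^ 2 + φ z
    - (⟪g, q - y⟫ + L / 2 * ‖q - y‖ ^ 2 + φ q) with hΔ
  -- Compare `q` with the point at parameter `s` on the segment from `q` to `z`.
  have key : ∀ s ∈ Set.Ioo (0 : ℝ) 1, L / 2 * (1 - s) * ‖z - q‖ ^ 2 ≤ Δ := by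
    intro s hs
    have h1 := isMinOn_iff.1 hq ((1 - s) • q + s • z) (Set.mem_univ _)
    have h2 := hφ.2 (Set.mem_univ q) (Set.mem_univ z) (by linarith [hs.2] : 0 ≤ 1 - s) hs.1.le
      (by ring)
    have e : (1 - s) • q + s • z - y = (1 - s) • (q - y) + s • (z - y) := by module
    have e2 : z - q = (z - y) - (q - y) := by abel
    have h3 : ‖(1 - s) • (q - y) + s • (z - y)‖ ^ 2
        = (1 - s) * ‖q - y‖ ^ 2 + s * ‖z - y‖ ^ 2 - s * (1 - s) * ‖z - q‖ ^ 2 := by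
      rw [e2, norm_add_sq_real, norm_sub_sq_real (z - y) (q - y), norm_smul, norm_smul, inner_smul_left,
        inner_smul_right, mul_pow, mul_pow, Real.norm_eq_abs, Real.norm_eq_abs, sq_abs, sq_abs,
        real_inner_comm (z - y) (q - y)]
      simp only [conj_trivial]
      ring
    simp only [e, h3, inner_add_right, inner_smul_right] at h1
    simp only [smul_eq_mul] at h2
    refine le_of_mul_le_mul_left ?_ hs.1
    rw [hΔ]
    linarith
  have hlim : Filter.Tendsto (fun s : ℝ => L / 2 * (1 - s) * ‖z - q‖ ^ 2)
      (nhdsWithin 0 (Set.Ioi 0)) (nhds (L / 2 * (1 - 0) * ‖z - q‖ ^ 2)) :=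
    (Continuous.tendsto (by fun_prop) 0).mono_left nhdsWithin_le_nhds
  have h := le_of_tendsto hlim
    (Filter.eventually_of_mem (Ioo_mem_nhdsGT zero_lt_one) key)
  linarith

/-- The basic inequality for one proximal gradient step. -/
lemma prox_grad_ineq {L : ℝ} {f : E → ℝ} {f' : E → E} {φ : E → ℝ}
    (hf : ConvexOn ℝ Set.univ f)
    (hgrad : ∀ z : E, HasFDerivAt f (innerSL ℝ (f' z)) z)
    (hLip : ∀ u v : E, ‖f' u - f' v‖ ≤ L * ‖u - v‖)
    (hφ : ConvexOn ℝ Set.univ φ) (y q : E)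
    (hq : IsMinOn (fun z => f y + ⟪f' y, z - y⟫ + L / 2 * ‖z - y‖ ^ 2 + φ z) Set.univ q)
    (z : E) :
    f q + φ q + L / 2 * ‖z - q‖ ^ 2 ≤ f z + φ z + L / 2 * ‖z - y‖ ^ 2 := by
  have h1 := descent_lemma hgrad hLip y q
  have h2 := convex_gradient_ineq hf hgrad y z
  have h3 := prox_three_point hφ (f y) (f' y) y q hq z
  linarith

/-- The basic inequality at `z = (1 - 1/t) a + (1/t) b`, multiplied by `t²`. -/
lemma scaled_step {L : ℝ} {F : E → ℝ} (hF : ConvexOn ℝ Set.univ F) {y q : E}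
    (h : ∀ z, F q + L / 2 * ‖z - q‖ ^ 2 ≤ F z + L / 2 * ‖z - y‖ ^ 2)
    {t : ℝ} (ht : 1 ≤ t) (a b : E) :
    t ^ 2 * (F q - F b) + L / 2 * ‖t • q - (t - 1) • a - b‖ ^ 2
      ≤ (t ^ 2 - t) * (F a - F b) + L / 2 * ‖t • y - (t - 1) • a - b‖ ^ 2 := by
  have ht0 : 0 < t := by linarith
  have hinv : t * t⁻¹ = 1 := mul_inv_cancel₀ ht0.ne'
  have hz := h ((1 - t⁻¹) • a + t⁻¹ • b)
  have hc := hF.2 (Set.mem_univ a) (Set.mem_univ b)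
    (by linarith [inv_le_one_of_one_le₀ ht] : 0 ≤ 1 - t⁻¹) (inv_pos.2 ht0).le (by ring)
  have hn : ∀ w : E, ‖t • w - (t - 1) • a - b‖ ^ 2
      = t ^ 2 * ‖(1 - t⁻¹) • a + t⁻¹ • b - w‖ ^ 2 := by
    intro w
    have e : t • w - (t - 1) • a - b = (-t) • ((1 - t⁻¹) • a + t⁻¹ • b - w) := by
      have e1 : (t * t⁻¹) • (b - a) = b - a := by rw [hinv, one_smul]
      have e2 : (-t) • ((1 - t⁻¹) • a + t⁻¹ • b - w)
          = t • w - t • a - (t * t⁻¹) • (b - a) := by module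
      rw [e2, e1]
      module
    rw [e, norm_smul, mul_pow, Real.norm_eq_abs, sq_abs, neg_sq]
  simp only [smul_eq_mul] at hc
  rw [hn, hn]
  have hm := mul_le_mul_of_nonneg_left (hz.trans (add_le_add_left hc _)) (sq_nonneg t)
  have e3 : t ^ 2 * ((1 - t⁻¹) * F a + t⁻¹ * F b) = (t ^ 2 - t) * F a + t * F b := by
    linear_combination (t * F b - t * F a) * hinv
  linarith

end Aux

/-- FPGM (FISTA) satisfies, for every N ≥ 1,
F(x_N) − F(x_*) ≤ LR²/(2t_{N−1}²) ≤ 2LR²/(N+1)². -/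
theorem fpgm_cost_bound
    {E : Type*} [NormedAddCommGroup E] [InnerProductSpace ℝ E]
    (L : ℝ) (hL : 0 < L)
    (f : E → ℝ) (f' : E → E) (φ : E → ℝ)
    (hf : ConvexOn ℝ Set.univ f)
    (hgrad : ∀ z : E, HasFDerivAt f (innerSL ℝ (f' z)) z)
    (hLip : ∀ u v : E, ‖f' u - f' v‖ ≤ L * ‖u - v‖)
    (hφ : ConvexOn ℝ Set.univ φ)
    (p : E → E)
    (hp : ∀ y : E, IsMinOn
      (fun z => f y + ⟪f' y, z - y⟫ + L / 2 * ‖z - y‖ ^ 2 + φ z) Set.univ (p y))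
    (xs : E) (hxs : IsMinOn (fun z => f z + φ z) Set.univ xs)
    (R : ℝ) (hR0 : 0 ≤ R)
    (t : ℕ → ℝ) (ht0 : t 0 = 1)
    (ht : ∀ i, t (i + 1) = (1 + Real.sqrt (1 + 4 * t i ^ 2)) / 2)
    (x y : ℕ → E) (hR : ‖x 0 - xs‖ ≤ R)
    (hy0 : y 0 = x 0)
    (hx : ∀ i, x (i + 1) = p (y i))
    (hy : ∀ i, y (i + 1) = x (i + 1) + ((t i - 1) / t (i + 1)) • (x (i + 1) - x i))
    (N : ℕ) (hN : 1 ≤ N) :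
    f (x N) + φ (x N) - (f xs + φ xs) ≤ L * R ^ 2 / (2 * t (N - 1) ^ 2) ∧
      L * R ^ 2 / (2 * t (N - 1) ^ 2) ≤ 2 * L * R ^ 2 / ((N : ℝ) + 1) ^ 2 := by
  -- The FISTA parameters: the defining quadratic relation, linear growth.
  have hrel : ∀ i, t (i + 1) ^ 2 - t (i + 1) = t i ^ 2 := by
    intro i
    have h := Real.sq_sqrt (by positivity : (0 : ℝ) ≤ 1 + 4 * t i ^ 2)
    rw [ht i]
    linarith
  have hgrow : ∀ i : ℕ, ((i : ℝ) + 2) / 2 ≤ t i := by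
    intro i
    induction i with
    | zero => simp [ht0]
    | succ k ih =>
      have h : 2 * t k ≤ Real.sqrt (1 + 4 * t k ^ 2) := Real.le_sqrt_of_sq_le (by linarith)
      rw [ht k]
      push_cast
      linarith
  have hone : ∀ i, 1 ≤ t i := fun i => by
    have := hgrow i
    have : (0 : ℝ) ≤ i := i.cast_nonneg
    linarith
  have hF : ConvexOn ℝ Set.univ (fun z => f z + φ z) := hf.add hφ
  have hstep : ∀ i z, f (x (i + 1)) + φ (x (i + 1)) + L / 2 * ‖z - x (i + 1)‖ ^ 2
      ≤ f z + φ z + L / 2 * ‖z - y i‖ ^ 2 := by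
    intro i z
    rw [hx i]
    exact prox_grad_ineq hf hgrad hLip hφ (y i) _ (hp (y i)) z
  have henergy : ∀ i, t i ^ 2 * (f (x (i + 1)) + φ (x (i + 1)) - (f xs + φ xs))
      + L / 2 * ‖t i • x (i + 1) - (t i - 1) • x i - xs‖ ^ 2 ≤ L / 2 * R ^ 2 := by
    intro i
    induction i with
    | zero =>
      have h := scaled_step hF (hstep 0) (hone 0) (x 0) xs
      have hR2 : L / 2 * ‖x 0 - xs‖ ^ 2 ≤ L / 2 * R ^ 2 := by gcongr
      rw [ht0, hy0] at h
      rw [ht0]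
      simp only [one_smul, sub_self, zero_smul, sub_zero, one_pow, zero_mul, zero_add] at h hR2 ⊢
      linarith
    | succ k ih =>
      have h := scaled_step hF (hstep (k + 1)) (hone (k + 1)) (x (k + 1)) xs
      -- The momentum coefficient makes the two extrapolated points coincide.
      have e : t (k + 1) • y (k + 1) - (t (k + 1) - 1) • x (k + 1)
          = t k • x (k + 1) - (t k - 1) • x k := by
        have hpos : t (k + 1) ≠ 0 := by linarith [hone (k + 1)]
        rw [hy k, smul_add, smul_smul, mul_div_cancel₀ _ hpos]
        module
      rw [e, hrel k] at h
      exact h.trans ih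
  obtain ⟨n, rfl⟩ : ∃ n, N = n + 1 := ⟨N - 1, by omega⟩
  rw [Nat.add_sub_cancel]
  have htn : 0 < t n := by linarith [hone n]
  constructor
  · rw [le_div_iff₀ (by positivity)]
    have h : 0 ≤ L / 2 * ‖t n • x (n + 1) - (t n - 1) • x n - xs‖ ^ 2 := by positivity
    linarith [henergy n]
  · rw [div_le_div_iff₀ (by positivity) (by positivity)]
    have h : ((n : ℝ) + 2) ^ 2 ≤ (2 * t n) ^ 2 := by
      have := hgrow n
      gcongr
      linarith
    have h' := mul_le_mul_of_nonneg_left h (by positivity : 0 ≤ L * R ^ 2)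
    push_cast
    linarith
end
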